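/- arXiv:2401.04660 — 2 statements merged into one kernel-verified Lean document; each statement's English description precedes it below -/
import Mathlib

section
/- Let A ∈ ℝ^{n×n}, B ∈ ℝ^{n×r} with rank(B) = r, C ∈ ℝ^{p×n}, and H ∈ ℝ^{n×p} with H C B = B and rank(H) = r. Then for every s ∈ ℂ: the rank over ℂ of the block matrix [[s I_n − A, −B], [C, 0]] equals n + r if and only if the rank over ℂ of the stacked matrix [s I_n − (I − H C) A; C] equals n. In particular, [[s I_n − A, −B],[C, 0]] has rank n + r for all s with Re(s) ≥ 0 if and only if the pair ((I − H C) A, C) is detectable. -/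
open Matrix

/-- PBH detectability of a pair `(M, C)` of real matrices. -/
def Detectable {n p : ℕ} (M : Matrix (Fin n) (Fin n) ℝ)
    (C : Matrix (Fin p) (Fin n) ℝ) : Prop :=
  ∀ s : ℂ, 0 ≤ s.re →
    (Matrix.fromRows (s • (1 : Matrix (Fin n) (Fin n) ℂ) - M.map Complex.ofReal)
      (C.map Complex.ofReal)).rank = n

theorem Matrix.rank_eq_card_iff_forall_mulVec_eq_zero {m n K : Type*} [Field K] [Fintype m]
    [Fintype n] (M : Matrix m n K) :
    M.rank = Fintype.card n ↔ ∀ v, M *ᵥ v = 0 → v = 0 := by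
  have h := M.mulVecLin.finrank_range_add_finrank_ker
  rw [Module.finrank_fintype_fun_eq_card] at h
  have hker : M.rank = Fintype.card n ↔ Module.finrank K (LinearMap.ker M.mulVecLin) = 0 := by
    unfold Matrix.rank
    omega
  rw [hker, Submodule.finrank_eq_zero, LinearMap.ker_eq_bot']
  rfl

/-- If `range B ⊆ range H` and the ranks agree, then `H` factors through `B`. -/
theorem Matrix.exists_eq_mul_of_rank_eq {m n p K : Type*} [Field K] [Fintype m] [Fintype n]
    [Fintype p] (B : Matrix m n K) (H : Matrix m p K) (X : Matrix p n K)
    (hX : H * X = B) (hrank : B.rank = H.rank) : ∃ Y : Matrix n p K, H = B * Y := by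
  classical
  have hle : LinearMap.range B.mulVecLin ≤ LinearMap.range H.mulVecLin := by
    rw [← hX, Matrix.mulVecLin_mul]
    exact LinearMap.range_comp_le_range _ _
  have heq := Submodule.eq_of_le_of_finrank_eq hle hrank
  have hcol : ∀ j, ∃ v, B *ᵥ v = H.col j := fun j => by
    have hj : H.col j ∈ LinearMap.range H.mulVecLin := ⟨Pi.single j 1, by simp⟩
    rw [← heq] at hj
    exact hj
  choose v hv using hcol
  refine ⟨Matrix.of fun i j => v j i, ?_⟩
  ext i j
  exact (congrFun (hv j) i).symm

/-- The system matrix `[[sI − A, −B], [C, 0]]` has full column rank iff `[sI − (I − HC)A; C]` does,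
when `H = BK` and `KCB = I`. -/
theorem rank_fromBlocks_eq_iff_rank_fromRows_eq {n r p F : Type*} [Field F] [Fintype n]
    [Fintype r] [Fintype p] [DecidableEq n] [DecidableEq r] (A : Matrix n n F) (B : Matrix n r F)
    (C : Matrix p n F) (K : Matrix r p F) (hK : K * C * B = 1) (s : F) :
    (Matrix.fromBlocks (s • (1 : Matrix n n F) - A) (-B) C 0).rank
        = Fintype.card n + Fintype.card r ↔
      (Matrix.fromRows (s • (1 : Matrix n n F) - (1 - B * K * C) * A) C).rank
        = Fintype.card n := by
  rw [← Fintype.card_sum, Matrix.rank_eq_card_iff_forall_mulVec_eq_zero,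
    Matrix.rank_eq_card_iff_forall_mulVec_eq_zero]
  have hKv (u : r → F) : K *ᵥ (C *ᵥ (B *ᵥ u)) = u := by
    simp only [Matrix.mulVec_mulVec, ← Matrix.mul_assoc, hK, Matrix.one_mulVec]
  constructor
  · intro h x hx
    rw [Matrix.fromRows_mulVec, ← Sum.elim_zero_zero, Sum.elim_eq_iff] at hx
    obtain ⟨h1, h2⟩ := hx
    have h3 := h (Sum.elim x (-(K *ᵥ (C *ᵥ (A *ᵥ x))))) (by
      rw [Matrix.fromBlocks_mulVec, ← Sum.elim_zero_zero, Sum.elim_eq_iff]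
      refine ⟨?_, by simpa using h2⟩
      rw [← h1]
      simp [Matrix.sub_mulVec, Matrix.sub_mul, Matrix.neg_mulVec, Matrix.mulVec_neg,
        Matrix.mul_assoc]
      abel)
    exact funext fun i => congrFun h3 (Sum.inl i)
  · intro h w hw
    obtain ⟨x, u, rfl⟩ : ∃ x u, w = Sum.elim x u :=
      ⟨w ∘ Sum.inl, w ∘ Sum.inr, (Sum.elim_comp_inl_inr w).symm⟩
    rw [Matrix.fromBlocks_mulVec, ← Sum.elim_zero_zero, Sum.elim_eq_iff] at hw
    simp only [Sum.elim_comp_inl, Sum.elim_comp_inr, Matrix.sub_mulVec, Matrix.smul_mulVec,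
      Matrix.one_mulVec, Matrix.neg_mulVec, Matrix.zero_mulVec, add_zero] at hw
    obtain ⟨h1, h2⟩ := hw
    have hBu : B *ᵥ u = s • x - A *ᵥ x := (add_neg_eq_zero.mp h1).symm
    have hu : u = -(K *ᵥ (C *ᵥ (A *ᵥ x))) := by
      rw [← hKv u, hBu, Matrix.mulVec_sub, Matrix.mulVec_smul, h2, smul_zero, zero_sub,
        Matrix.mulVec_neg]
    have hx : x = 0 := by
      apply h
      rw [Matrix.fromRows_mulVec, ← Sum.elim_zero_zero, Sum.elim_eq_iff]
      refine ⟨?_, h2⟩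
      rw [← h1, hu]
      simp [Matrix.sub_mulVec, Matrix.sub_mul, Matrix.mulVec_neg, Matrix.smul_mulVec,
        Matrix.mul_assoc]
      abel
    subst hx
    simp [hu]

/-- For `H` with `HCB = B` and `rank H = r = rank B`: for every `s ∈ ℂ`,
`rank [[sI − A, −B],[C, 0]] = n + r` iff `rank [sI − (I−HC)A; C] = n`; in
particular the full-rank condition on the closed right half-plane is equivalent to
detectability of `((I−HC)A, C)`. -/
theorem stmt11 {n r p : ℕ}
    (A : Matrix (Fin n) (Fin n) ℝ) (B : Matrix (Fin n) (Fin r) ℝ)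
    (hB : B.rank = r)
    (C : Matrix (Fin p) (Fin n) ℝ) (H : Matrix (Fin n) (Fin p) ℝ)
    (hH : H * C * B = B) (hHrank : H.rank = r) :
    (∀ s : ℂ,
      (Matrix.fromBlocks
          (s • (1 : Matrix (Fin n) (Fin n) ℂ) - A.map Complex.ofReal)
          (-(B.map Complex.ofReal)) (C.map Complex.ofReal) 0).rank = n + r ↔
        (Matrix.fromRows
          (s • (1 : Matrix (Fin n) (Fin n) ℂ) - ((1 - H * C) * A).map Complex.ofReal)
          (C.map Complex.ofReal)).rank = n) ∧
    ((∀ s : ℂ, 0 ≤ s.re →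
      (Matrix.fromBlocks
          (s • (1 : Matrix (Fin n) (Fin n) ℂ) - A.map Complex.ofReal)
          (-(B.map Complex.ofReal)) (C.map Complex.ofReal) 0).rank = n + r) ↔
      Detectable ((1 - H * C) * A) C) := by
  have key : ∀ s : ℂ,
      (Matrix.fromBlocks
          (s • (1 : Matrix (Fin n) (Fin n) ℂ) - A.map Complex.ofReal)
          (-(B.map Complex.ofReal)) (C.map Complex.ofReal) 0).rank = n + r ↔
        (Matrix.fromRows
          (s • (1 : Matrix (Fin n) (Fin n) ℂ) - ((1 - H * C) * A).map Complex.ofReal)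
          (C.map Complex.ofReal)).rank = n := by
    intro s
    obtain ⟨K, rfl⟩ := Matrix.exists_eq_mul_of_rank_eq B H (C * B)
      (by rw [← Matrix.mul_assoc, hH]) (hB.trans hHrank.symm)
    have hinj := (Matrix.rank_eq_card_iff_forall_mulVec_eq_zero B).mp (by simpa using hB)
    have hK : K * C * B = 1 := by
      refine Matrix.ext_of_mulVec_single fun j => sub_eq_zero.mp ?_
      rw [← Matrix.sub_mulVec]
      apply hinj
      rw [Matrix.mulVec_mulVec, Matrix.mul_sub, Matrix.mul_one,
        ← Matrix.mul_assoc, ← Matrix.mul_assoc, hH, sub_self, Matrix.zero_mulVec]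
    have hmul {a b c : ℕ} (M : Matrix (Fin a) (Fin b) ℝ) (N : Matrix (Fin b) (Fin c) ℝ) :
        (M * N).map Complex.ofReal = M.map Complex.ofReal * N.map Complex.ofReal :=
      Matrix.map_mul (f := Complex.ofRealHom)
    have hone (a : ℕ) : (1 : Matrix (Fin a) (Fin a) ℝ).map Complex.ofReal = 1 :=
      Matrix.map_one _ Complex.ofReal_zero Complex.ofReal_one
    have h := rank_fromBlocks_eq_iff_rank_fromRows_eq (A.map Complex.ofReal)
      (B.map Complex.ofReal) (C.map Complex.ofReal) (K.map Complex.ofReal)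
      (by rw [← hmul, ← hmul, hK, hone]) s
    rw [hmul, Matrix.map_sub _ Complex.ofReal_sub, hone, hmul, hmul]
    simpa only [Fintype.card_fin] using h
  exact ⟨key, forall₂_congr fun s _ => key s⟩
end

section
/- For each i ∈ {1,…,M}, let A ∈ ℝ^{n×n}, B_i^m ∈ ℝ^{n×m_i}, B_i^p ∈ ℝ^{n×r_i} with rank(B_i^p) = r_i, C_i ∈ ℝ^{p_i×n}, and let U_i ∈ ℝ^{m_i×N}, W_i ∈ ℝ^{r_i×N}, X_i ∈ ℝ^{n×N} be data matrices with [U_i; W_i; X_i] of full row rank m_i + r_i + n; define Ẋ_i := A X_i + B_i^m U_i + B_i^p W_i, Y_i := C_i X_i, Ẏ_i := C_i Ẋ_i. Let L ∈ ℝ^{M×M} be symmetric with nonpositive off-diagonal entries, L·𝟏 = 0, and irreducible. Suppose: (a) for every i, rank([U_i; Ẏ_i; X_i]) = rank([U_i; X_i; Ẋ_i]); and (b) for i = 1, the rank over ℂ of [s X_1 − Ẋ_1; U_1; Y_1] equals n + m_1 + r_1 for every s ∈ ℂ with Re(s) ≥ 0. Then there exist matrices E_i ∈ ℝ^{n×n},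 F_i ∈ ℝ^{n×m_i}, L_i, H_i ∈ ℝ^{n×p_i}, K_i ∈ ℝ^{n×n} such that for every i: F_i = (I − H_i C_i) B_i^m, (I − H_i C_i) B_i^p = 0, E_i = (I − H_i C_i) A − (L_i − E_i H_i) C_i, and moreover blockdiag(E_1,…,E_M) − blockdiag(K_1,…,K_M)·(L ⊗ I_n) is Hurwitz. -/
open Matrix Kronecker

/-- A matrix is irreducible if for every nonempty proper subset `S` of the index set
there exist `i ∈ S` and `j ∉ S` with `L i j ≠ 0`. -/
def MatIrreducible {M : ℕ} (L : Matrix (Fin M) (Fin M) ℝ) : Prop :=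
  ∀ S : Finset (Fin M), S.Nonempty → S ≠ Finset.univ →
    ∃ i ∈ S, ∃ j, j ∉ S ∧ L i j ≠ 0

/-- A real square matrix is Hurwitz if every eigenvalue of its complexification has
negative real part. -/
def IsHurwitz {n : Type*} [Fintype n] [DecidableEq n] (A : Matrix n n ℝ) : Prop :=
  ∀ z ∈ spectrum ℂ (A.map Complex.ofReal), z.re < 0

/-- Block diagonal matrix with square blocks `E 0, …, E (k-1)`. -/
def bdiag {k n : ℕ} (E : Fin k → Matrix (Fin n) (Fin n) ℝ) :
    Matrix (Fin k × Fin n) (Fin k × Fin n) ℝ :=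
  fun p q => if p.1 = q.1 then E p.1 p.2 q.2 else 0

theorem map_ofReal_mul {ι κ l : Type*} [Fintype κ] (S : Matrix ι κ ℝ) (T : Matrix κ l ℝ) :
    (S * T).map Complex.ofReal = S.map Complex.ofReal * T.map Complex.ofReal :=
  Matrix.map_mul (f := Complex.ofRealHom)

theorem re_star_dotProduct_map_mulVec {ι : Type*} [Fintype ι] (S : Matrix ι ι ℝ) (w : ι → ℂ) :
    (star w ⬝ᵥ (S.map Complex.ofReal *ᵥ w)).re =
      (fun i => (w i).re) ⬝ᵥ (S *ᵥ fun i => (w i).re) +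
        (fun i => (w i).im) ⬝ᵥ (S *ᵥ fun i => (w i).im) := by
  simp [dotProduct, mulVec, Complex.re_sum, Complex.im_sum, Finset.sum_add_distrib]

theorem im_star_dotProduct_map_mulVec {ι : Type*} [Fintype ι] {S : Matrix ι ι ℝ}
    (hS : S.IsSymm) (w : ι → ℂ) :
    (star w ⬝ᵥ (S.map Complex.ofReal *ᵥ w)).im = 0 := by
  have h : (fun i => (w i).re) ⬝ᵥ (S *ᵥ fun i => (w i).im) =
      (fun i => (w i).im) ⬝ᵥ (S *ᵥ fun i => (w i).re) := by
    rw [dotProduct_mulVec, ← mulVec_transpose, hS.eq, dotProduct_comm]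
  simp only [dotProduct, mulVec] at h
  simp [dotProduct, mulVec, Complex.re_sum, Complex.im_sum, Finset.sum_add_distrib, h]

/-- A quadratic form that is positive on nonzero real vectors is positive on nonzero complex ones. -/
theorem re_star_dotProduct_pos {ι : Type*} [Fintype ι] {S : Matrix ι ι ℝ} {w : ι → ℂ}
    {V : Submodule ℝ (ι → ℝ)}
    (hS : ∀ x ∈ V, x ≠ 0 → 0 < x ⬝ᵥ (S *ᵥ x))
    (hre : (fun i => (w i).re) ∈ V) (him : (fun i => (w i).im) ∈ V) (hw : w ≠ 0) :
    0 < (star w ⬝ᵥ (S.map Complex.ofReal *ᵥ w)).re := by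
  rw [re_star_dotProduct_map_mulVec]
  have hnn : ∀ x ∈ V, 0 ≤ x ⬝ᵥ (S *ᵥ x) := fun x hx => by
    by_cases h : x = 0
    · simp [h]
    · exact (hS x hx h).le
  by_cases h : (fun i => (w i).re) = 0
  · have h' : (fun i => (w i).im) ≠ 0 := fun h' =>
      hw (funext fun i => Complex.ext (congrFun h i) (congrFun h' i))
    exact add_pos_of_nonneg_of_pos (hnn _ hre) (hS _ him h')
  · exact add_pos_of_pos_of_nonneg (hS _ hre h) (hnn _ him)

theorem isOpen_setOf_quadratic_pos (ι : Type*) [Fintype ι] :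
    IsOpen {S : Matrix ι ι ℝ | ∀ x, x ≠ 0 → 0 < x ⬝ᵥ (S *ᵥ x)} := by
  have h : {S : Matrix ι ι ℝ | ∀ x, x ≠ 0 → 0 < x ⬝ᵥ (S *ᵥ x)} =
      {S | ∀ x ∈ Metric.sphere (0 : ι → ℝ) 1, 0 < x ⬝ᵥ (S *ᵥ x)} := by
    ext S
    refine ⟨fun h x hx => h x (ne_zero_of_mem_unit_sphere ⟨x, hx⟩), fun h x hx => ?_⟩
    have hn : 0 < ‖x‖ := norm_pos_iff.2 hx
    have := h (‖x‖⁻¹ • x) (by simp [norm_smul, hn.ne'])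
    simp only [mulVec_smul, dotProduct_smul, smul_dotProduct, smul_eq_mul] at this
    have hi : 0 < ‖x‖⁻¹ := inv_pos.2 hn
    exact (mul_pos_iff_of_pos_left hi).1 ((mul_pos_iff_of_pos_left hi).1 this)
  rw [h, isOpen_iff_mem_nhds]
  intro S hS
  refine (isCompact_sphere (0 : ι → ℝ) 1).eventually_forall_of_forall_eventually fun x hx => ?_
  have hc : Continuous fun q : Matrix ι ι ℝ × (ι → ℝ) => q.2 ⬝ᵥ (q.1 *ᵥ q.2) := by fun_prop
  exact hc.continuousAt.eventually (lt_mem_nhds (hS x hx))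

/-- On a subspace where `S` is positive, a large multiple of `S` dominates `R`. -/
theorem exists_forall_quadratic_lt_mul {ι : Type*} [Fintype ι] (R S : Matrix ι ι ℝ)
    (V : Submodule ℝ (ι → ℝ)) (hS : ∀ x ∈ V, x ≠ 0 → 0 < x ⬝ᵥ (S *ᵥ x)) :
    ∃ k : ℝ, ∀ x ∈ V, x ≠ 0 → x ⬝ᵥ (R *ᵥ x) < k * (x ⬝ᵥ (S *ᵥ x)) := by
  have hK : IsCompact (Metric.sphere (0 : ι → ℝ) 1 ∩ V) :=
    (isCompact_sphere _ _).inter_right V.closed_of_finiteDimensional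
  have hc (T : Matrix ι ι ℝ) : Continuous fun x : ι → ℝ => x ⬝ᵥ (T *ᵥ x) := by fun_prop
  obtain ⟨k, hk⟩ := hK.bddAbove_image (f := fun x => (x ⬝ᵥ (R *ᵥ x)) / (x ⬝ᵥ (S *ᵥ x)))
    ((hc R).continuousOn.div (hc S).continuousOn fun x hx =>
      (hS x hx.2 (ne_zero_of_mem_unit_sphere ⟨x, hx.1⟩)).ne')
  refine ⟨k + 1, fun x hx hx0 => ?_⟩
  have hn : 0 < ‖x‖ := norm_pos_iff.2 hx0
  have := hk ⟨‖x‖⁻¹ • x, ⟨by simp [norm_smul, hn.ne'], V.smul_mem _ hx⟩, rfl⟩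
  simp only [mulVec_smul, dotProduct_smul, smul_dotProduct, smul_eq_mul] at this
  rw [mul_div_mul_left _ _ (inv_pos.2 hn).ne', mul_div_mul_left _ _ (inv_pos.2 hn).ne',
    div_le_iff₀ (hS x hx hx0)] at this
  linarith [hS x hx hx0]

theorem exists_eigenvector_of_mem_spectrum {ι : Type*} [Fintype ι] [DecidableEq ι]
    {T : Matrix ι ι ℂ} {z : ℂ} (hz : z ∈ spectrum ℂ T) : ∃ w ≠ 0, T *ᵥ w = z • w := by
  rw [← Matrix.spectrum_toLin', ← Module.End.hasEigenvalue_iff_mem_spectrum] at hz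
  obtain ⟨w, hw⟩ := hz.exists_hasEigenvector
  exact ⟨w, hw.2, by simpa using hw.apply_eq_smul⟩

/-- Lyapunov's criterion. -/
theorem isHurwitz_of_lyapunov {ι : Type*} [Fintype ι] [DecidableEq ι] {A P : Matrix ι ι ℝ}
    (hP : P.IsSymm) (hpos : ∀ x, x ≠ 0 → 0 < x ⬝ᵥ (P *ᵥ x))
    (hneg : ∀ x, x ≠ 0 → x ⬝ᵥ ((P * A) *ᵥ x) < 0) : IsHurwitz A := by
  intro z hz
  obtain ⟨w, hw, h⟩ := exists_eigenvector_of_mem_spectrum hz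
  have h1 := re_star_dotProduct_pos (V := ⊤) (fun x _ => hpos x) trivial trivial hw
  have h2 := re_star_dotProduct_pos (S := -(P * A)) (V := ⊤)
    (fun x _ hx => by simpa [neg_mulVec] using hneg x hx) trivial trivial hw
  have h3 : (-(P * A)).map Complex.ofReal = -(P.map Complex.ofReal * A.map Complex.ofReal) := by
    rw [← map_ofReal_mul]
    ext; simp
  rw [h3, neg_mulVec, ← mulVec_mulVec, h, mulVec_smul, dotProduct_neg, dotProduct_smul,
    smul_eq_mul, Complex.neg_re, Complex.mul_re, im_star_dotProduct_map_mulVec hP] at h2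
  nlinarith

theorem dotProduct_self_pos {ι : Type*} [Fintype ι] {x : ι → ℝ} (hx : x ≠ 0) : 0 < x ⬝ᵥ x :=
  (Finset.sum_nonneg fun i _ => mul_self_nonneg (x i)).lt_of_ne
    fun h => hx (dotProduct_self_eq_zero.1 h.symm)

theorem exists_eq_trace_mul {ι : Type*} [Fintype ι] [DecidableEq ι]
    (φ : Matrix ι ι ℝ →ₗ[ℝ] ℝ) : ∃ X : Matrix ι ι ℝ, ∀ T, φ T = (X * T).trace := by
  let X : Matrix ι ι ℝ := fun i j => φ (single j i 1)
  refine ⟨X, fun T => ?_⟩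
  have : φ = (traceLinearMap ι ℝ ℝ) ∘ₗ LinearMap.mulLeft ℝ X := by
    refine Matrix.ext_linearMap ℝ fun i j => LinearMap.ext_ring ?_
    have h : (X * single i j 1).trace = φ (single i j 1) := by
      rw [trace_mul_single]; simp [X]
    simpa using h.symm
  exact LinearMap.congr_fun this T

theorem trace_mul_vecMulVec_self {ι : Type*} [Fintype ι] (X : Matrix ι ι ℝ) (x : ι → ℝ) :
    (X * vecMulVec x x).trace = x ⬝ᵥ (X *ᵥ x) := by
  rw [mul_vecMulVec, trace_vecMulVec, dotProduct_comm]

/-- An open convex set disjoint from the range of a linear map lies in an open half-space whose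
bounding hyperplane contains the range. -/
theorem exists_linearMap_neg_of_disjoint_range {E F : Type*} [AddCommGroup E] [Module ℝ E]
    [TopologicalSpace E] [IsTopologicalAddGroup E] [ContinuousSMul ℝ E] [AddCommGroup F]
    [Module ℝ F] {O : Set E} (hconv : Convex ℝ O) (hopen : IsOpen O) (Λ : F →ₗ[ℝ] E)
    (hdisj : Disjoint O (Set.range Λ)) :
    ∃ f : E →ₗ[ℝ] ℝ, (∀ a ∈ O, f a < 0) ∧ ∀ q, f (Λ q) = 0 := by
  obtain ⟨f, u, hf, hu⟩ := geometric_hahn_banach_open hconv hopen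
    (by simpa only [LinearMap.coe_range] using (LinearMap.range Λ).convex) hdisj
  have hu0 : u ≤ 0 := by simpa using hu (Λ 0) ⟨0, rfl⟩
  refine ⟨f.toLinearMap, fun a ha => (hf a ha).trans_le hu0, fun q => ?_⟩
  change f (Λ q) = 0
  by_contra hne
  have := hu (Λ (((u - 1) / f (Λ q)) • q)) ⟨_, rfl⟩
  rw [map_smul, map_smul, smul_eq_mul, div_mul_cancel₀ _ hne] at this
  linarith

/-- Theorem of the alternative for the Lyapunov inequality with output injection. -/
theorem lyapunov_alternative {ι κ : Type*} [Fintype ι] [DecidableEq ι] [Fintype κ]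
    (A : Matrix ι ι ℝ) (C : Matrix κ ι ℝ) :
    (∃ (P : Matrix ι ι ℝ) (G : Matrix ι κ ℝ), (∀ x, x ≠ 0 → 0 < x ⬝ᵥ (P *ᵥ x)) ∧
      ∀ x, x ≠ 0 → 0 < x ⬝ᵥ ((G * C - (P * A + Aᵀ * P)) *ᵥ x)) ∨
    ∃ X : Matrix ι ι ℝ, X ≠ 0 ∧ X.PosSemidef ∧ (A * X + X * Aᵀ).PosSemidef ∧ C * X = 0 := by
  set O : Set (Matrix ι ι ℝ) := {S | ∀ x, x ≠ 0 → 0 < x ⬝ᵥ (S *ᵥ x)}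
  have hOconv : Convex ℝ O := by
    intro S hS T hT a b ha hb hab x hx
    have h1 := hS x hx
    have h2 := hT x hx
    simp only [add_mulVec, smul_mulVec, dotProduct_add, dotProduct_smul, smul_eq_mul]
    rcases ha.eq_or_lt with rfl | ha
    · obtain rfl : b = 1 := by linarith
      simpa using h2
    · positivity
  let Λ : Matrix ι ι ℝ × Matrix ι κ ℝ →ₗ[ℝ] Matrix ι ι ℝ × Matrix ι ι ℝ :=
    { toFun := fun q => (q.1, q.2 * C - (q.1 * A + Aᵀ * q.1))
      map_add' := fun q q' => by
        ext1
        · rfl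
        · simp only [Prod.fst_add, Prod.snd_add, Matrix.add_mul, Matrix.mul_add]; abel
      map_smul' := fun c q => by
        ext1
        · rfl
        · simp [smul_sub] }
  by_cases hdisj : Disjoint (O ×ˢ O) (Set.range Λ)
  · right
    have hOO : Convex ℝ (O ×ˢ O) := hOconv.prod hOconv
    have hopen : IsOpen (O ×ˢ O) :=
      (isOpen_setOf_quadratic_pos ι).prod (isOpen_setOf_quadratic_pos ι)
    obtain ⟨f, hf, hΛ⟩ := exists_linearMap_neg_of_disjoint_range hOO hopen Λ hdisj
    have hone : (1 : Matrix ι ι ℝ) ∈ O := fun x hx => by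
      simpa only [one_mulVec] using dotProduct_self_pos hx
    have hneg : ∀ S T : Matrix ι ι ℝ, (∀ x, 0 ≤ x ⬝ᵥ (S *ᵥ x)) → (∀ x, 0 ≤ x ⬝ᵥ (T *ᵥ x)) →
        f (S, T) ≤ 0 := by
      intro S T hS hT
      have hmem : ∀ ε : ℝ, 0 < ε → ∀ S : Matrix ι ι ℝ, (∀ x, 0 ≤ x ⬝ᵥ (S *ᵥ x)) → S + ε • 1 ∈ O := by
        intro ε hε S hS x hx
        have := hone x hx
        simp only [add_mulVec, smul_mulVec, dotProduct_add, dotProduct_smul, smul_eq_mul]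
        have := hS x
        positivity
      have h1 := hf (1, 1) ⟨hone, hone⟩
      by_contra! hpos
      set ε : ℝ := f (S, T) / -f (1, 1) with hε
      have hε0 : 0 < ε := div_pos hpos (by linarith)
      have := hf (S + ε • 1, T + ε • 1) ⟨hmem ε hε0 S hS, hmem ε hε0 T hT⟩
      have h2 : ((S + ε • 1, T + ε • 1) : Matrix ι ι ℝ × Matrix ι ι ℝ) = (S, T) + ε • (1, 1) := rfl
      rw [h2, map_add, map_smul, smul_eq_mul, hε, div_mul_eq_mul_div, mul_div_assoc] at this
      have h3 : f (1, 1) / -f (1, 1) = -1 := by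
        rw [div_neg, div_self (by linarith)]
      rw [h3] at this
      linarith
    obtain ⟨X, hX⟩ := exists_eq_trace_mul (-(f ∘ₗ LinearMap.inr ℝ _ _))
    replace hX (T) : f (0, T) = -(X * T).trace := by
      rw [← hX]; simp
    have hfst (P) : f (P, 0) = -((A * X + X * Aᵀ) * P).trace := by
      have h1 := hΛ (P, 0)
      have h2 : Λ (P, 0) = (P, 0) + -(0, P * A + Aᵀ * P) := by simp [Λ]
      rw [h2, map_add, map_neg, hX, mul_add, trace_add, ← mul_assoc, ← mul_assoc,
        trace_mul_comm _ A, ← mul_assoc, ← trace_add, ← add_mul] at h1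
      linarith
    have hXnn (x : ι → ℝ) : 0 ≤ x ⬝ᵥ (X *ᵥ x) := by
      have := hneg 0 (vecMulVec x x) (by simp) fun y => by
        rw [vecMulVec_mulVec]
        simp [dotProduct_comm y x, mul_self_nonneg]
      rw [hX, trace_mul_vecMulVec_self] at this
      linarith
    have hYnn (x : ι → ℝ) : 0 ≤ x ⬝ᵥ ((A * X + X * Aᵀ) *ᵥ x) := by
      have := hneg (vecMulVec x x) 0 (fun y => by
        rw [vecMulVec_mulVec]
        simp [dotProduct_comm y x, mul_self_nonneg]) (by simp)
      rw [hfst, trace_mul_vecMulVec_self] at this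
      linarith
    have hsymm : Xᵀ = X := by
      rw [ext_iff_trace_mul_right]
      intro T
      have hq (x : ι → ℝ) : x ⬝ᵥ (Tᵀ *ᵥ x) = x ⬝ᵥ (T *ᵥ x) := by
        rw [mulVec_transpose, dotProduct_comm, ← dotProduct_mulVec]
      have h1 := hneg 0 (Tᵀ - T) (by simp) (by simp [sub_mulVec, hq])
      have h2 := hneg 0 (T - Tᵀ) (by simp) (by simp [sub_mulVec, hq])
      rw [hX, mul_sub, trace_sub] at h1 h2
      have h3 : (Xᵀ * T).trace = (X * Tᵀ).trace := by
        rw [← trace_transpose, transpose_mul, transpose_transpose, trace_mul_comm]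
      linarith
    refine ⟨X, ?_, ?_, ?_, ?_⟩
    · rintro rfl
      have h1 := hf (1, 1) ⟨hone, hone⟩
      have h2 : ((1, 1) : Matrix ι ι ℝ × Matrix ι ι ℝ) = (1, 0) + (0, 1) := by simp
      rw [h2, map_add, hX, hfst] at h1
      simp at h1
    · exact .of_dotProduct_mulVec_nonneg (by simpa [IsHermitian] using hsymm) (by simpa using hXnn)
    · refine .of_dotProduct_mulVec_nonneg ?_ (by simpa using hYnn)
      simp [IsHermitian, hsymm, add_comm]
    · rw [ext_iff_trace_mul_right]
      intro G
      have h1 := hΛ (0, G)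
      have h2 : Λ (0, G) = (0, G * C) := by simp [Λ]
      rw [h2, hX, ← Matrix.mul_assoc, trace_mul_comm, ← Matrix.mul_assoc] at h1
      simpa using h1
  · left
    obtain ⟨_, ⟨h1, h2⟩, ⟨P, G⟩, rfl⟩ := Set.not_disjoint_iff.1 hdisj
    exact ⟨P, G, h1, h2⟩

theorem exists_eq_mul_of_forall_mulVec_eq_zero {K ι κ l : Type*} [Field K] [Fintype ι] [Fintype κ]
    {X : Matrix κ ι K} {T : Matrix l ι K} (h : ∀ x, X *ᵥ x = 0 → T *ᵥ x = 0) :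
    ∃ Y : Matrix l κ K, T = Y * X := by
  classical
  have hrow (i : l) : ∃ c : κ → K, T i = c ᵥ* X := by
    have : LinearMap.proj i ∘ₗ T.mulVecLin ∈
        Submodule.span K (Set.range fun j => LinearMap.proj j ∘ₗ X.mulVecLin) := by
      refine mem_span_of_iInf_ker_le_ker fun x hx => ?_
      have h0 : X *ᵥ x = 0 := funext fun j => by simpa using (Submodule.mem_iInf _).1 hx j
      simp [h x h0]
    obtain ⟨c, hc⟩ := (Submodule.mem_span_range_iff_exists_fun K).1 this
    refine ⟨c, funext fun k => ?_⟩
    have := LinearMap.congr_fun hc (Pi.single k 1)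
    simpa [vecMul, dotProduct, LinearMap.sum_apply] using this.symm
  choose Y hY using hrow
  exact ⟨Y, funext hY⟩

theorem exists_eigenvector_of_posSemidef {ι : Type*} [Fintype ι] {A X : Matrix ι ι ℝ}
    (hX0 : X ≠ 0) (hX : X.PosSemidef) (hAX : (A * X + X * Aᵀ).PosSemidef) :
    ∃ (μ : ℂ) (w : ι → ℂ), 0 ≤ μ.re ∧ X.map Complex.ofReal *ᵥ w ≠ 0 ∧
      A.map Complex.ofReal *ᵥ (X.map Complex.ofReal *ᵥ w) =
        μ • (X.map Complex.ofReal *ᵥ w) := by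
  classical
  have hsymm : Xᵀ = X := by simpa [IsHermitian] using hX.1
  obtain ⟨Y, hY⟩ : ∃ Y, X * Aᵀ = Y * X := by
    refine exists_eq_mul_of_forall_mulVec_eq_zero fun x hx => ?_
    have h1 : x ⬝ᵥ ((X * Aᵀ) *ᵥ x) = 0 := by
      rw [← mulVec_mulVec, dotProduct_mulVec, ← mulVec_transpose, hsymm, hx, zero_dotProduct]
    have h2 := (hAX.dotProduct_mulVec_zero_iff x).1 (by
      simp [add_mulVec, h1, ← mulVec_mulVec x A X, hx])
    simpa [add_mulVec, ← mulVec_mulVec x A X, hx] using h2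
  replace hY : A * X = X * Yᵀ := by
    rw [← hsymm, ← transpose_mul, hsymm, ← hY, transpose_mul, hsymm, transpose_transpose]
  replace hY : A.map Complex.ofReal * X.map Complex.ofReal =
      X.map Complex.ofReal * (Yᵀ).map Complex.ofReal := by
    rw [← map_ofReal_mul, hY, map_ofReal_mul]
  set V := LinearMap.range (X.map Complex.ofReal).mulVecLin with hV
  have hinv : ∀ v ∈ V, (A.map Complex.ofReal).mulVecLin v ∈ V := by
    rintro _ ⟨w, rfl⟩
    refine ⟨(Yᵀ).map Complex.ofReal *ᵥ w, ?_⟩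
    simp only [mulVecLin_apply, mulVec_mulVec, hY]
  have hVnt : Nontrivial V := by
    rw [Submodule.nontrivial_iff_ne_bot, Ne, LinearMap.range_eq_bot]
    intro h
    refine hX0 (Matrix.ext fun i j => ?_)
    have := congrFun (LinearMap.congr_fun h (Pi.single j 1)) i
    simpa using this
  obtain ⟨μ, hμ⟩ := Module.End.exists_eigenvalue ((A.map Complex.ofReal).mulVecLin.restrict hinv)
  obtain ⟨⟨_, w, rfl⟩, hw⟩ := hμ.exists_hasEigenvector
  have hne : X.map Complex.ofReal *ᵥ w ≠ 0 := fun h => hw.2 (Subtype.ext h)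
  have heq : A.map Complex.ofReal *ᵥ (X.map Complex.ofReal *ᵥ w) =
      μ • (X.map Complex.ofReal *ᵥ w) := congrArg Subtype.val hw.apply_eq_smul
  refine ⟨μ, w, ?_, hne, heq⟩
  have hnn (x : ι → ℝ) : 0 ≤ x ⬝ᵥ (X *ᵥ x) := by simpa using hX.dotProduct_mulVec_nonneg x
  have hpos : 0 < (star w ⬝ᵥ (X.map Complex.ofReal *ᵥ w)).re := by
    rw [re_star_dotProduct_map_mulVec]
    refine lt_of_le_of_ne (add_nonneg (hnn _) (hnn _)) fun h => hne ?_
    have h0 := (add_eq_zero_iff_of_nonneg (hnn _) (hnn _)).1 h.symm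
    have hre := (hX.dotProduct_mulVec_zero_iff fun i => (w i).re).1 (by simpa using h0.1)
    have him := (hX.dotProduct_mulVec_zero_iff fun i => (w i).im).1 (by simpa using h0.2)
    funext i
    have hre := congrFun hre i
    have him := congrFun him i
    simp only [mulVec, dotProduct, Pi.zero_apply] at hre him
    apply Complex.ext <;> simp [mulVec, dotProduct, Complex.re_sum, Complex.im_sum, hre, him]
  have hA : 0 ≤ (star w ⬝ᵥ ((A * X).map Complex.ofReal *ᵥ w)).re := by
    rw [re_star_dotProduct_map_mulVec]
    have h (x : ι → ℝ) : 0 ≤ x ⬝ᵥ ((A * X) *ᵥ x) := by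
      have h1 : x ⬝ᵥ ((X * Aᵀ) *ᵥ x) = x ⬝ᵥ ((A * X) *ᵥ x) := by
        rw [show X * Aᵀ = (A * X)ᵀ by rw [transpose_mul, hsymm], mulVec_transpose, dotProduct_comm,
          ← dotProduct_mulVec]
      have h2 := hAX.dotProduct_mulVec_nonneg x
      simp only [star_trivial, add_mulVec, dotProduct_add, h1] at h2
      linarith
    exact add_nonneg (h _) (h _)
  rw [map_ofReal_mul, ← mulVec_mulVec, heq, dotProduct_smul, smul_eq_mul, Complex.mul_re,
    im_star_dotProduct_map_mulVec hsymm, mul_zero, sub_zero] at hA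
  exact nonneg_of_mul_nonneg_left hA hpos

/-- A pair satisfying the Popov–Belevitch–Hautus detectability test admits a real output injection
that makes it Hurwitz. -/
theorem exists_isHurwitz_sub_mul {ι κ : Type*} [Fintype ι] [DecidableEq ι] [Fintype κ]
    (A : Matrix ι ι ℝ) (C : Matrix κ ι ℝ)
    (h : ∀ (s : ℂ) (v : ι → ℂ), 0 ≤ s.re → A.map Complex.ofReal *ᵥ v = s • v →
      C.map Complex.ofReal *ᵥ v = 0 → v = 0) :
    ∃ G : Matrix ι κ ℝ, IsHurwitz (A - G * C) := by
  rcases lyapunov_alternative A C with ⟨P, G, hP, hG⟩ | ⟨X, hX0, hX, hAX, hCX⟩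
  · set Q : Matrix ι ι ℝ := P + Pᵀ with hQ
    have hT (T : Matrix ι ι ℝ) (x : ι → ℝ) : x ⬝ᵥ (Tᵀ *ᵥ x) = x ⬝ᵥ (T *ᵥ x) := by
      rw [mulVec_transpose, dotProduct_comm, ← dotProduct_mulVec]
    have hQpos (x : ι → ℝ) (hx : x ≠ 0) : 0 < x ⬝ᵥ (Q *ᵥ x) := by
      rw [hQ, add_mulVec, dotProduct_add, hT]
      linarith [hP x hx]
    have hQu : IsUnit Q.det := by
      refine isUnit_iff_ne_zero.2 fun hdet => ?_
      obtain ⟨x, hx, h0⟩ := exists_mulVec_eq_zero_iff.2 hdet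
      simpa [h0] using hQpos x hx
    refine ⟨Q⁻¹ * G, isHurwitz_of_lyapunov (P := Q) ?_ hQpos fun x hx => ?_⟩
    · rw [hQ, IsSymm, transpose_add, transpose_transpose, add_comm]
    · have h1 : Q * (A - Q⁻¹ * G * C) = P * A + Pᵀ * A - G * C := by
        rw [Matrix.mul_sub, ← Matrix.mul_assoc, ← Matrix.mul_assoc, mul_nonsing_inv _ hQu,
          Matrix.one_mul, hQ, Matrix.add_mul]
      have h2 : x ⬝ᵥ ((Aᵀ * P) *ᵥ x) = x ⬝ᵥ ((Pᵀ * A) *ᵥ x) := by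
        rw [← hT, transpose_mul, transpose_transpose]
      have h3 := hG x hx
      rw [h1]
      simp only [sub_mulVec, add_mulVec, dotProduct_sub, dotProduct_add, h2] at h3 ⊢
      linarith
  · obtain ⟨μ, w, hμ, hne, heq⟩ := exists_eigenvector_of_posSemidef hX0 hX hAX
    refine (hne (h μ _ hμ heq ?_)).elim
    rw [mulVec_mulVec, ← map_ofReal_mul, hCX]
    ext; simp

theorem eq_zero_of_card_le_rank_mul {K q k l : Type*} [Field K] [Fintype k] [Fintype l]
    {T : Matrix q k K} {D : Matrix k l K} (h : Fintype.card k ≤ (T * D).rank)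
    {x : k → K} (hx : T *ᵥ x = 0) : x = 0 := by
  have h1 : Fintype.card k ≤ T.rank := h.trans (rank_mul_le_left T D)
  have h2 := LinearMap.finrank_range_add_finrank_ker T.mulVecLin
  rw [Module.finrank_fintype_fun_eq_card] at h2
  have h3 : Module.finrank K (LinearMap.ker T.mulVecLin) = 0 := by
    unfold Matrix.rank at h1
    omega
  have h4 : x ∈ LinearMap.ker T.mulVecLin := by simpa using hx
  rwa [Submodule.finrank_eq_zero.1 h3, Submodule.mem_bot] at h4

theorem rank_mul_eq_right_of_injective {K q k l : Type*} [Field K] [Fintype k] [Fintype l]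
    {T : Matrix q k K} (D : Matrix k l K) (hT : ∀ x, T *ᵥ x = 0 → x = 0) :
    (T * D).rank = D.rank := by
  have hinj : Function.Injective T.mulVecLin :=
    (injective_iff_map_eq_zero _).2 fun x hx => hT x (by simpa using hx)
  unfold Matrix.rank
  rw [mulVecLin_mul, LinearMap.range_comp]
  exact (Submodule.equivMapOfInjective _ hinj _).symm.finrank_eq

/-- The data-driven rank condition forces `C * Bp` to have a left inverse. -/
theorem exists_mul_eq_one_of_rank_eq {ι m r p N : Type*} [Fintype ι] [Fintype m] [Fintype r]
    [Fintype p] [Fintype N] [DecidableEq r]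
    {A : Matrix ι ι ℝ} {Bm : Matrix ι m ℝ} {Bp : Matrix ι r ℝ} (hBp : Bp.rank = Fintype.card r)
    {C : Matrix p ι ℝ} {U : Matrix m N ℝ} {W : Matrix r N ℝ} {X : Matrix ι N ℝ}
    (hrank : (fromRows U (fromRows W X)).rank =
      Fintype.card m + Fintype.card r + Fintype.card ι)
    (ha : (fromRows U (fromRows (C * (A * X + Bm * U + Bp * W)) X)).rank =
      (fromRows U (fromRows X (A * X + Bm * U + Bp * W))).rank) :
    ∃ J : Matrix r p ℝ, J * (C * Bp) = 1 := by
  classical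
  let T₁ := fromRows (fromCols (1 : Matrix m m ℝ) (fromCols (0 : Matrix m r ℝ) (0 : Matrix m ι ℝ)))
    (fromRows (fromCols (C * Bm) (fromCols (C * Bp) (C * A)))
      (fromCols (0 : Matrix ι m ℝ) (fromCols (0 : Matrix ι r ℝ) (1 : Matrix ι ι ℝ))))
  let T₂ := fromRows (fromCols (1 : Matrix m m ℝ) (fromCols (0 : Matrix m r ℝ) (0 : Matrix m ι ℝ)))
    (fromRows (fromCols (0 : Matrix ι m ℝ) (fromCols (0 : Matrix ι r ℝ) (1 : Matrix ι ι ℝ)))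
      (fromCols Bm (fromCols Bp A)))
  have h₁ : T₁ * fromRows U (fromRows W X) =
      fromRows U (fromRows (C * (A * X + Bm * U + Bp * W)) X) := by
    simp only [T₁, fromRows_mul, fromCols_mul_fromRows, Matrix.one_mul, Matrix.zero_mul, add_zero,
      zero_add, Matrix.mul_add, Matrix.mul_assoc]
    congr 2
    abel
  have h₂ : T₂ * fromRows U (fromRows W X) =
      fromRows U (fromRows X (A * X + Bm * U + Bp * W)) := by
    simp only [T₂, fromRows_mul, fromCols_mul_fromRows, Matrix.one_mul, Matrix.zero_mul, add_zero,
      zero_add]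
    congr 2
    abel
  have hBp' (w : r → ℝ) (hw : Bp *ᵥ w = 0) : w = 0 :=
    eq_zero_of_card_le_rank_mul (D := (1 : Matrix r r ℝ)) (by rw [Matrix.mul_one, hBp]) hw
  have hT₂ (x : m ⊕ r ⊕ ι → ℝ) (hx : T₂ *ᵥ x = 0) : x = 0 := by
    obtain ⟨u, y, rfl⟩ : ∃ u y, x = Sum.elim u y := ⟨_, _, (Sum.elim_comp_inl_inr x).symm⟩
    obtain ⟨w, v, rfl⟩ : ∃ w v, y = Sum.elim w v := ⟨_, _, (Sum.elim_comp_inl_inr y).symm⟩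
    simp only [T₂, fromRows_mulVec, fromCols_mulVec_sumElim, one_mulVec, zero_mulVec, add_zero,
      zero_add, ← Sum.elim_zero_zero, Sum.elim_eq_iff] at hx
    obtain ⟨rfl, rfl, hw⟩ := hx
    have hw : w = 0 := hBp' w (by simpa using hw)
    simp [hw]
  have hT₁ : Fintype.card (m ⊕ r ⊕ ι) ≤ (T₁ * fromRows U (fromRows W X)).rank := by
    rw [h₁, ha, ← h₂, rank_mul_eq_right_of_injective _ hT₂, hrank]
    simp [add_assoc]
  have hCB (w : r → ℝ) (hw : (C * Bp) *ᵥ w = 0) : (1 : Matrix r r ℝ) *ᵥ w = 0 := by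
    have h0 : Sum.elim (0 : m → ℝ) (Sum.elim w (0 : ι → ℝ)) = 0 := by
      refine eq_zero_of_card_le_rank_mul hT₁ ?_
      simp only [T₁, fromRows_mulVec, fromCols_mulVec_sumElim, mulVec_zero, zero_mulVec, add_zero,
        hw, Sum.elim_zero_zero]
    rw [one_mulVec]
    funext i
    exact congrFun h0 (Sum.inr (Sum.inl i))
  obtain ⟨J, hJ⟩ := exists_eq_mul_of_forall_mulVec_eq_zero hCB
  exact ⟨J, hJ.symm⟩

/-- The data-driven rank condition at `s` excludes `s` as an unobservable eigenvalue of the system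
from which the unknown input has been decoupled. -/
theorem eq_zero_of_rank_eq {ι m r p N : Type*} [Fintype ι] [Fintype m] [Fintype r] [Fintype p]
    [Fintype N] [DecidableEq ι]
    {A : Matrix ι ι ℝ} {Bm : Matrix ι m ℝ} {Bp : Matrix ι r ℝ}
    {C : Matrix p ι ℝ} {U : Matrix m N ℝ} {W : Matrix r N ℝ} {X : Matrix ι N ℝ} {s : ℂ}
    (hb : (fromRows (s • X.map Complex.ofReal - (A * X + Bm * U + Bp * W).map Complex.ofReal)
        (fromRows (U.map Complex.ofReal) ((C * X).map Complex.ofReal))).rank =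
      Fintype.card ι + Fintype.card m + Fintype.card r) (J : Matrix r p ℝ) {v : ι → ℂ}
    (hv : ((1 - Bp * J * C) * A).map Complex.ofReal *ᵥ v = s • v)
    (hCv : C.map Complex.ofReal *ᵥ v = 0) : v = 0 := by
  classical
  let T := fromRows (fromCols (-Bm.map Complex.ofReal) (fromCols (-Bp.map Complex.ofReal)
      (s • (1 : Matrix ι ι ℂ) - A.map Complex.ofReal)))
    (fromRows (fromCols (1 : Matrix m m ℂ) (fromCols (0 : Matrix m r ℂ) (0 : Matrix m ι ℂ)))
      (fromCols (0 : Matrix p m ℂ) (fromCols (0 : Matrix p r ℂ) (C.map Complex.ofReal))))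
  have hadd (S T : Matrix ι N ℝ) :
      (S + T).map Complex.ofReal = S.map Complex.ofReal + T.map Complex.ofReal := by
    ext; simp
  have hT : T * fromRows (U.map Complex.ofReal)
        (fromRows (W.map Complex.ofReal) (X.map Complex.ofReal)) =
      fromRows (s • X.map Complex.ofReal - (A * X + Bm * U + Bp * W).map Complex.ofReal)
        (fromRows (U.map Complex.ofReal) ((C * X).map Complex.ofReal)) := by
    simp only [T, fromRows_mul, fromCols_mul_fromRows, Matrix.one_mul, Matrix.zero_mul, add_zero,
      zero_add, hadd, map_ofReal_mul, Matrix.sub_mul, Matrix.neg_mul, Matrix.smul_mul]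
    congr 1
    abel
  set w : r → ℂ := -((J * C * A).map Complex.ofReal *ᵥ v) with hw
  have h0 : Sum.elim (0 : m → ℂ) (Sum.elim w v) = 0 := by
    refine eq_zero_of_card_le_rank_mul (T := T) (D := fromRows (U.map Complex.ofReal)
        (fromRows (W.map Complex.ofReal) (X.map Complex.ofReal))) ?_ ?_
    · rw [hT, hb]
      simp only [Fintype.card_sum]
      omega
    · have h1 : (1 - Bp * J * C) * A = A - Bp * (J * C * A) := by
        simp only [Matrix.sub_mul, Matrix.one_mul, Matrix.mul_assoc]
      have h2 : (A - Bp * (J * C * A)).map Complex.ofReal =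
          A.map Complex.ofReal - Bp.map Complex.ofReal * (J * C * A).map Complex.ofReal := by
        rw [← map_ofReal_mul]; ext; simp
      rw [h1, h2, sub_mulVec, ← mulVec_mulVec] at hv
      have h3 : -(Bp.map Complex.ofReal *ᵥ w) + (s • v - A.map Complex.ofReal *ᵥ v) = 0 := by
        rw [← hv, hw, mulVec_neg]; abel
      simp only [T, fromRows_mulVec, fromCols_mulVec_sumElim, mulVec_zero, zero_mulVec, add_zero,
        hCv, Sum.elim_zero_zero, neg_mulVec, sub_mulVec, smul_mulVec, one_mulVec, h3]
  funext i
  exact congrFun h0 (Sum.inr (Sum.inr i))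

theorem bdiag_mulVec {k n : ℕ} (E : Fin k → Matrix (Fin n) (Fin n) ℝ) (y : Fin k × Fin n → ℝ)
    (i : Fin k) (a : Fin n) : (bdiag E *ᵥ y) (i, a) = (E i *ᵥ fun b => y (i, b)) a := by
  simp [mulVec, dotProduct, bdiag, Fintype.sum_prod_type, ite_mul]

theorem dotProduct_kronecker_one_mulVec {k n : ℕ} (L : Matrix (Fin k) (Fin k) ℝ)
    (x : Fin k × Fin n → ℝ) :
    x ⬝ᵥ ((L ⊗ₖ (1 : Matrix (Fin n) (Fin n) ℝ)) *ᵥ x) =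
      ∑ a, (fun i => x (i, a)) ⬝ᵥ (L *ᵥ fun i => x (i, a)) := by
  simp only [mulVec, dotProduct, Fintype.sum_prod_type, kroneckerMap_apply, one_apply, mul_ite,
    mul_one, mul_zero, ite_mul, zero_mul, Finset.sum_ite_eq, Finset.mem_univ, if_true]
  exact Finset.sum_comm

theorem dotProduct_laplacian_mulVec {k : ℕ} {L : Matrix (Fin k) (Fin k) ℝ} (hsym : L.IsSymm)
    (hone : L *ᵥ (fun _ => (1 : ℝ)) = 0) (u : Fin k → ℝ) :
    2 * (u ⬝ᵥ (L *ᵥ u)) = ∑ i, ∑ j, -L i j * (u i - u j) ^ 2 := by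
  have hrow (i) : ∑ j, L i j = 0 := by simpa [mulVec, dotProduct] using congrFun hone i
  have h1 : ∑ i, ∑ j, L i j * u i ^ 2 = 0 := by
    simp [← Finset.sum_mul, hrow]
  have h2 : ∑ i, ∑ j, L i j * u j ^ 2 = 0 := by
    rw [Finset.sum_comm]
    simp_rw [← hsym.apply _]
    exact h1
  have h3 : u ⬝ᵥ (L *ᵥ u) = ∑ i, ∑ j, L i j * (u i * u j) := by
    simp only [mulVec, dotProduct, Finset.mul_sum]
    exact Finset.sum_congr rfl fun i _ => Finset.sum_congr rfl fun j _ => by ring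
  have h4 : ∑ i, ∑ j, -L i j * (u i - u j) ^ 2 =
      -(∑ i, ∑ j, L i j * u i ^ 2) + 2 * (∑ i, ∑ j, L i j * (u i * u j)) -
        ∑ i, ∑ j, L i j * u j ^ 2 := by
    simp only [Finset.mul_sum, ← Finset.sum_neg_distrib, ← Finset.sum_add_distrib,
      ← Finset.sum_sub_distrib]
    exact Finset.sum_congr rfl fun i _ => Finset.sum_congr rfl fun j _ => by ring
  rw [h4, h1, h2, h3]
  ring

theorem dotProduct_laplacian_mulVec_nonneg {k : ℕ} {L : Matrix (Fin k) (Fin k) ℝ}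
    (hsym : L.IsSymm) (hoff : ∀ i j, i ≠ j → L i j ≤ 0)
    (hone : L *ᵥ (fun _ => (1 : ℝ)) = 0) (u : Fin k → ℝ) : 0 ≤ u ⬝ᵥ (L *ᵥ u) := by
  have h := dotProduct_laplacian_mulVec hsym hone u
  have : 0 ≤ ∑ i, ∑ j, -L i j * (u i - u j) ^ 2 := by
    refine Finset.sum_nonneg fun i _ => Finset.sum_nonneg fun j _ => ?_
    rcases eq_or_ne i j with rfl | hij
    · simp
    · exact mul_nonneg (neg_nonneg.2 (hoff i j hij)) (sq_nonneg _)
  linarith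

theorem dotProduct_laplacian_mulVec_pos {k : ℕ} {L : Matrix (Fin k) (Fin k) ℝ}
    (hsym : L.IsSymm) (hoff : ∀ i j, i ≠ j → L i j ≤ 0)
    (hone : L *ᵥ (fun _ => (1 : ℝ)) = 0) (hirr : MatIrreducible L) {u : Fin k → ℝ} {i₀ : Fin k}
    (hi₀ : u i₀ = 0) (hu : u ≠ 0) : 0 < u ⬝ᵥ (L *ᵥ u) := by
  refine (dotProduct_laplacian_mulVec_nonneg hsym hoff hone u).lt_of_ne fun h0 => hu ?_
  have h := dotProduct_laplacian_mulVec hsym hone u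
  rw [← h0, mul_zero, eq_comm] at h
  have hnn (i j) : 0 ≤ -L i j * (u i - u j) ^ 2 := by
    rcases eq_or_ne i j with rfl | hij
    · simp
    · exact mul_nonneg (neg_nonneg.2 (hoff i j hij)) (sq_nonneg _)
  have hz (i j) : L i j * (u i - u j) ^ 2 = 0 := by
    have h1 := (Finset.sum_eq_zero_iff_of_nonneg
      fun i _ => Finset.sum_nonneg fun j _ => hnn i j).1 h i (Finset.mem_univ i)
    have h2 := (Finset.sum_eq_zero_iff_of_nonneg fun j _ => hnn i j).1 h1 j (Finset.mem_univ j)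
    linarith
  by_contra hne
  obtain ⟨i, hi, j, hj, hij⟩ := hirr {i | u i = 0} ⟨i₀, by simpa using hi₀⟩ fun huniv =>
    hne (funext fun i => (Finset.mem_filter.1 (huniv.symm.subset (Finset.mem_univ i))).2)
  have := (mul_eq_zero.1 (hz i j)).resolve_left hij
  simp only [Finset.mem_filter, Finset.mem_univ, true_and] at hi hj
  rw [hi] at this
  exact hj (by simpa using this)

/-- A Hurwitz node pins a connected network: high-gain diffusive coupling at the other nodes makes
the whole network Hurwitz. -/
theorem exists_isHurwitz_bdiag_sub {k n : ℕ} {L : Matrix (Fin k) (Fin k) ℝ}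
    (hsym : L.IsSymm) (hoff : ∀ i j, i ≠ j → L i j ≤ 0)
    (hone : L *ᵥ (fun _ => (1 : ℝ)) = 0) (hirr : MatIrreducible L)
    (E : Fin k → Matrix (Fin n) (Fin n) ℝ) (i₀ : Fin k) (hE : IsHurwitz (E i₀)) :
    ∃ K : Fin k → Matrix (Fin n) (Fin n) ℝ,
      IsHurwitz (bdiag E - bdiag K * (L ⊗ₖ (1 : Matrix (Fin n) (Fin n) ℝ))) := by
  let V : Submodule ℝ (Fin k × Fin n → ℝ) :=
    { carrier := {x | ∀ a, x (i₀, a) = 0}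
      add_mem' := fun hx hy a => by simp [hx a, hy a]
      zero_mem' := fun a => rfl
      smul_mem' := fun c x hx a => by simp [hx a] }
  have hpos : ∀ x ∈ V, x ≠ 0 →
      0 < x ⬝ᵥ ((L ⊗ₖ (1 : Matrix (Fin n) (Fin n) ℝ)) *ᵥ x) := by
    intro x hx hx0
    rw [dotProduct_kronecker_one_mulVec]
    obtain ⟨⟨i, a⟩, hia⟩ := Function.ne_iff.1 hx0
    refine Finset.sum_pos' (fun a _ => dotProduct_laplacian_mulVec_nonneg hsym hoff hone _)
      ⟨a, Finset.mem_univ a, ?_⟩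
    exact dotProduct_laplacian_mulVec_pos hsym hoff hone hirr (hx a) fun h => hia (congrFun h i)
  obtain ⟨c, hc⟩ := exists_forall_quadratic_lt_mul (bdiag E) _ V hpos
  set K : Fin k → Matrix (Fin n) (Fin n) ℝ := fun i => if i = i₀ then 0 else c • 1 with hK
  refine ⟨K, fun z hz => ?_⟩
  set T := bdiag E - bdiag K * (L ⊗ₖ (1 : Matrix (Fin n) (Fin n) ℝ)) with hT
  obtain ⟨w, hw, h⟩ := exists_eigenvector_of_mem_spectrum hz
  by_cases hw0 : ∀ a, w (i₀, a) = 0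
  · have hquad : ∀ x ∈ V, x ≠ 0 → 0 < x ⬝ᵥ (-T *ᵥ x) := by
      intro x hx hx0
      have hKx (y : Fin k × Fin n → ℝ) : x ⬝ᵥ (bdiag K *ᵥ y) = c * (x ⬝ᵥ y) := by
        rw [dotProduct, dotProduct, Finset.mul_sum]
        refine Finset.sum_congr rfl fun ⟨i, a⟩ _ => ?_
        rw [bdiag_mulVec]
        by_cases hi : i = i₀
        · simp [hi, hx a]
        · simp only [hK, if_neg hi, smul_mulVec, one_mulVec, Pi.smul_apply, smul_eq_mul]
          ring
      rw [hT, neg_mulVec, sub_mulVec, ← mulVec_mulVec, dotProduct_neg, dotProduct_sub, hKx]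
      linarith [hc x hx hx0]
    have h1 := re_star_dotProduct_pos hquad (w := w) (fun a => by simp [hw0 a])
      (fun a => by simp [hw0 a]) hw
    have h2 : (-T).map Complex.ofReal = -T.map Complex.ofReal := by ext; simp
    have h3 : star w ⬝ᵥ w = ((∑ p, Complex.normSq (w p) : ℝ) : ℂ) := by
      simp [dotProduct, Complex.normSq_eq_conj_mul_self]
    rw [h2, neg_mulVec, h, dotProduct_neg, dotProduct_smul, h3, smul_eq_mul, Complex.neg_re,
      Complex.re_mul_ofReal] at h1
    have h4 : 0 ≤ ∑ p, Complex.normSq (w p) := Finset.sum_nonneg fun p _ => Complex.normSq_nonneg _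
    by_contra! hz0
    linarith [mul_nonneg hz0 h4]
  · apply hE
    have hrow (a : Fin n) (q : Fin k × Fin n) : T (i₀, a) q = bdiag E (i₀, a) q := by
      simp [hT, mul_apply, bdiag, hK]
    rw [← Matrix.spectrum_toLin', ← Module.End.hasEigenvalue_iff_mem_spectrum]
    refine Module.End.hasEigenvalue_of_hasEigenvector (x := fun a => w (i₀, a))
      ⟨Module.End.mem_eigenspace_iff.2 ?_, fun h0 => hw0 (congrFun h0)⟩
    funext a
    have ha := congrFun h (i₀, a)
    simp only [mulVec, dotProduct, map_apply, hrow] at ha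
    simpa [mulVec, dotProduct, bdiag, Fintype.sum_prod_type, apply_ite Complex.ofReal, ite_mul]
      using ha

/-- Existence of a distributed unknown-input observer, with conditions verifiable from
data alone. (Nodes are indexed by `Fin (M+2)`, node 1 being index `0`.) -/
theorem stmt17 {M n N : ℕ} {m r p : Fin (M + 2) → ℕ}
    -- system and data, for each node
    (A : Matrix (Fin n) (Fin n) ℝ)
    (Bm : ∀ i, Matrix (Fin n) (Fin (m i)) ℝ)
    (Bp : ∀ i, Matrix (Fin n) (Fin (r i)) ℝ)
    (hBp : ∀ i, (Bp i).rank = r i)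
    (C : ∀ i, Matrix (Fin (p i)) (Fin n) ℝ)
    (U : ∀ i, Matrix (Fin (m i)) (Fin N) ℝ)
    (W : ∀ i, Matrix (Fin (r i)) (Fin N) ℝ)
    (X : ∀ i, Matrix (Fin n) (Fin N) ℝ)
    (hrank : ∀ i, (Matrix.fromRows (U i) (Matrix.fromRows (W i) (X i))).rank =
      m i + r i + n)
    (Xdot : ∀ i, Matrix (Fin n) (Fin N) ℝ)
    (hXdot : ∀ i, Xdot i = A * X i + Bm i * U i + Bp i * W i)
    (Y : ∀ i, Matrix (Fin (p i)) (Fin N) ℝ) (hY : ∀ i, Y i = C i * X i)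
    (Ydot : ∀ i, Matrix (Fin (p i)) (Fin N) ℝ) (hYdot : ∀ i, Ydot i = C i * Xdot i)
    -- communication graph Laplacian
    (L : Matrix (Fin (M + 2)) (Fin (M + 2)) ℝ)
    (hsym : L.IsSymm)
    (hoff : ∀ i j, i ≠ j → L i j ≤ 0)
    (hone : L *ᵥ (fun _ => (1 : ℝ)) = 0)
    (hirr : MatIrreducible L)
    -- (a) data-driven solvability condition at each node
    (ha : ∀ i, (Matrix.fromRows (U i) (Matrix.fromRows (Ydot i) (X i))).rank =
      (Matrix.fromRows (U i) (Matrix.fromRows (X i) (Xdot i))).rank)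
    -- (b) data-driven detectability condition at node 1 (index 0)
    (hb : ∀ s : ℂ, 0 ≤ s.re →
      (Matrix.fromRows (s • (X 0).map Complex.ofReal - (Xdot 0).map Complex.ofReal)
        (Matrix.fromRows ((U 0).map Complex.ofReal)
          ((Y 0).map Complex.ofReal))).rank = n + m 0 + r 0) :
    ∃ (E K : Fin (M + 2) → Matrix (Fin n) (Fin n) ℝ)
      (F : ∀ i, Matrix (Fin n) (Fin (m i)) ℝ)
      (Lm : ∀ i, Matrix (Fin n) (Fin (p i)) ℝ)
      (H : ∀ i, Matrix (Fin n) (Fin (p i)) ℝ),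
      (∀ i, F i = (1 - H i * C i) * Bm i ∧
        (1 - H i * C i) * Bp i = 0 ∧
        E i = (1 - H i * C i) * A - (Lm i - E i * H i) * C i) ∧
      IsHurwitz (bdiag E - bdiag K * (L ⊗ₖ (1 : Matrix (Fin n) (Fin n) ℝ))) := by
  choose J hJ using fun i => exists_mul_eq_one_of_rank_eq (A := A) (Bm := Bm i) (Bp := Bp i)
    (C := C i) (U := U i) (W := W i) (X := X i) (by simpa using hBp i) (by simpa using hrank i)
    (by rw [← hXdot, ← hYdot]; exact ha i)
  set H : ∀ i, Matrix (Fin n) (Fin (p i)) ℝ := fun i => Bp i * J i with hH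
  obtain ⟨G, hG⟩ := exists_isHurwitz_sub_mul ((1 - H 0 * C 0) * A) (C 0) fun s v hs hv hCv => by
    refine eq_zero_of_rank_eq (Bm := Bm 0) (U := U 0) (W := W 0) (X := X 0) ?_ (J 0) hv hCv
    rw [← hXdot, ← hY]
    simpa using hb s hs
  let Γ : ∀ i, Matrix (Fin n) (Fin (p i)) ℝ := Function.update (fun _ => 0) 0 G
  set E : Fin (M + 2) → Matrix (Fin n) (Fin n) ℝ :=
    fun i => (1 - H i * C i) * A - Γ i * C i with hE
  have hE0 : IsHurwitz (E 0) := by simpa [hE, Γ] using hG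
  obtain ⟨K, hK⟩ := exists_isHurwitz_bdiag_sub hsym hoff hone hirr E 0 hE0
  refine ⟨E, K, fun i => (1 - H i * C i) * Bm i, fun i => Γ i + E i * H i, H,
    fun i => ⟨rfl, ?_, ?_⟩, hK⟩
  · rw [Matrix.sub_mul, Matrix.one_mul, hH, Matrix.mul_assoc, Matrix.mul_assoc, hJ, Matrix.mul_one,
      sub_self]
  · rw [add_sub_cancel_right]
end
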